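/- Let B be the open unit ball of ℝ³ and let s ∈ (1/2, 1]. For all positive real numbers a, b, A and every compact set K ⊂ B, there exists a constant c = c(a, b, A, s, K) > 0 such that for every function V : B → ℝ with a ≤ V(x) ≤ b for all x ∈ B and |V(x) − V(y)| ≤ A|x − y|^s for all x, y ∈ B, and every positive u ∈ C²(B) satisfying −∑ᵢ ∂²u/∂xᵢ² = V u⁵ in B, one has (sup_K u)^{2s−1} · (inf_B u) ≤ c. -/

import Mathlib

open MeasureTheory Metric Real

/-- The Euclidean Laplacian `∑ i, ∂²u/∂xᵢ²` (without sign). -/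
noncomputable def lapl {n : ℕ} (u : EuclideanSpace ℝ (Fin n) → ℝ)
    (x : EuclideanSpace ℝ (Fin n)) : ℝ :=
  ∑ i : Fin n,
    fderiv ℝ (fun y => fderiv ℝ u y (EuclideanSpace.single i 1)) x (EuclideanSpace.single i 1)

/-!
Choose a point `x₁` near `x ∈ K` that almost maximises `u` and rescale so that the new solution has
value `1` at the origin and is at most `2` on a large ball of radius about `L`. If the infimum of
`u` were large, the method of moving spheres would apply to the rescaled solution about every centre
at distance `L` from the origin, up to radius `L + 1`: the oscillation of `V` is absorbed by the
barrier `H (1 - √(l / ‖y‖))`, whose Laplacian is positive and decays slowly enough. Comparing with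
the Kelvin transform across the sphere that interchanges `y` and the origin gives
`L / (L + 1) ≤ u y` on the unit ball. For `L` large this contradicts `u 0 = 1`, because `-Δu = V u⁵`
is bounded below by a positive multiple of `a` there, so that `u 0` exceeds the boundary minimum by
a definite amount.
-/

open Set Filter Topology Module EuclideanGeometry
open scoped Laplacian RealInnerProductSpace

variable {E F ι : Type*} [NormedAddCommGroup E] [InnerProductSpace ℝ E]
  [NormedAddCommGroup F] [NormedSpace ℝ F] [Fintype ι]

section LaplacianCalculus

variable {x : E}

lemma differentiableAt_fderiv_of_contDiffAt_two {f : E → F} (hf : ContDiffAt ℝ 2 f x) :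
    DifferentiableAt ℝ (fderiv ℝ f) x :=
  (hf.fderiv_right (m := 1) le_rfl).differentiableAt one_ne_zero

lemma eventually_differentiableAt_of_contDiffAt_two {f : E → F} (hf : ContDiffAt ℝ 2 f x) :
    ∀ᶠ y in 𝓝 x, DifferentiableAt ℝ f y :=
  (hf.eventually (by simp)).mono fun _ hy ↦ hy.differentiableAt two_ne_zero

lemma fderiv_fderiv_apply {f : E → F} (hf : ContDiffAt ℝ 2 f x) (v : E) :
    fderiv ℝ (fun y ↦ fderiv ℝ f y v) x v = fderiv ℝ (fderiv ℝ f) x v v := by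
  rw [fderiv_clm_apply (differentiableAt_fderiv_of_contDiffAt_two hf) (by fun_prop)]
  simp

variable [FiniteDimensional ℝ E]

lemma laplacian_eq_sum_fderiv_fderiv (b : OrthonormalBasis ι ℝ E) (f : E → F) (x : E) :
    Δ f x = ∑ i, fderiv ℝ (fderiv ℝ f) x (b i) (b i) := by
  simp [InnerProductSpace.laplacian_eq_iteratedFDeriv_orthonormalBasis f b,
    iteratedFDeriv_two_apply]

lemma laplacian_eq_sum_fderiv_apply (b : OrthonormalBasis ι ℝ E) {f : E → F}
    (hf : ContDiffAt ℝ 2 f x) :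
    Δ f x = ∑ i, fderiv ℝ (fun y ↦ fderiv ℝ f y (b i)) x (b i) := by
  simp only [laplacian_eq_sum_fderiv_fderiv b, fderiv_fderiv_apply hf]

lemma laplacian_smul_of_contDiffAt (b : OrthonormalBasis ι ℝ E) {f : E → ℝ} {g : E → F}
    (hf : ContDiffAt ℝ 2 f x) (hg : ContDiffAt ℝ 2 g x) :
    Δ (fun y ↦ f y • g y) x =
      f x • Δ g x + Δ f x • g x + (2 : ℝ) • ∑ i, fderiv ℝ f x (b i) • fderiv ℝ g x (b i) := by
  have hf₁ := hf.differentiableAt two_ne_zero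
  have hg₁ := hg.differentiableAt two_ne_zero
  have hf₂ := differentiableAt_fderiv_of_contDiffAt_two hf
  have hg₂ := differentiableAt_fderiv_of_contDiffAt_two hg
  have second_deriv (v : E) : fderiv ℝ (fun y ↦ fderiv ℝ (fun z ↦ f z • g z) y v) x v =
      f x • fderiv ℝ (fderiv ℝ g) x v v + fderiv ℝ (fderiv ℝ f) x v v • g x +
        (2 : ℝ) • fderiv ℝ f x v • fderiv ℝ g x v := by
    have first_deriv : (fun y ↦ fderiv ℝ (fun z ↦ f z • g z) y v) =ᶠ[𝓝 x]
        fun y ↦ f y • fderiv ℝ g y v + fderiv ℝ f y v • g y := by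
      filter_upwards [eventually_differentiableAt_of_contDiffAt_two hf,
        eventually_differentiableAt_of_contDiffAt_two hg] with y hfy hgy
      simp [fderiv_fun_smul hfy hgy]
    rw [first_deriv.fderiv_eq, fderiv_fun_add (by fun_prop) (by fun_prop),
      fderiv_fun_smul hf₁ (by fun_prop), fderiv_fun_smul (by fun_prop) hg₁]
    simp only [add_apply, smul_apply, ContinuousLinearMap.smulRight_apply, fderiv_fderiv_apply hf,
      fderiv_fderiv_apply hg]
    module
  rw [laplacian_eq_sum_fderiv_apply b (f := fun y ↦ f y • g y) (hf.smul hg)]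
  simp only [second_deriv, Finset.sum_add_distrib,
    ← Finset.smul_sum, ← Finset.sum_smul, ← laplacian_eq_sum_fderiv_fderiv b]

/- When `fderiv φ x = c • R` with `R` an isometry, `R` maps orthonormal bases to orthonormal
bases. -/
lemma laplacian_comp_of_fderiv_eq_smul {u : E → F} {φ : E → E} {c : ℝ} {R : E ≃ₗᵢ[ℝ] E}
    (hu : ContDiffAt ℝ 2 u (φ x)) (hφ : ContDiffAt ℝ 2 φ x)
    (hR : ∀ v, fderiv ℝ φ x v = c • R v) :
    Δ (fun y ↦ u (φ y)) x = c ^ 2 • Δ u (φ x) + fderiv ℝ u (φ x) (Δ φ x) := by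
  let b := stdOrthonormalBasis ℝ E
  have second_deriv (v : E) : fderiv ℝ (fun y ↦ fderiv ℝ (fun z ↦ u (φ z)) y v) x v =
      c ^ 2 • fderiv ℝ (fderiv ℝ u) (φ x) (R v) (R v) +
        fderiv ℝ u (φ x) (fderiv ℝ (fderiv ℝ φ) x v v) := by
    have first_deriv : (fun y ↦ fderiv ℝ (fun z ↦ u (φ z)) y v) =ᶠ[𝓝 x]
        fun y ↦ fderiv ℝ u (φ y) (fderiv ℝ φ y v) := by
      filter_upwards [eventually_differentiableAt_of_contDiffAt_two hφ,
        hφ.continuousAt.eventually (eventually_differentiableAt_of_contDiffAt_two hu)]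
        with y hφy huy
      exact congrArg (· v) (fderiv_comp y huy hφy)
    have hu₂ := differentiableAt_fderiv_of_contDiffAt_two hu
    have hφ₁ := hφ.differentiableAt two_ne_zero
    have hφ₂ := differentiableAt_fderiv_of_contDiffAt_two hφ
    have hu₂φ : DifferentiableAt ℝ (fun y ↦ fderiv ℝ u (φ y)) x := hu₂.comp x hφ₁
    have outer : fderiv ℝ (fun y ↦ fderiv ℝ u (φ y)) x v =
        fderiv ℝ (fderiv ℝ u) (φ x) (fderiv ℝ φ x v) :=
      congrArg (· v) (fderiv_comp x hu₂ hφ₁)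
    rw [first_deriv.fderiv_eq, fderiv_clm_apply hu₂φ (by fun_prop)]
    simp only [add_apply, ContinuousLinearMap.comp_apply,
      ContinuousLinearMap.flip_apply, outer, fderiv_fderiv_apply hφ, hR, map_smul,
      smul_apply, smul_smul]
    module
  rw [laplacian_eq_sum_fderiv_apply b (f := fun y ↦ u (φ y)) (hu.comp x hφ),
    laplacian_eq_sum_fderiv_fderiv (b.map R) u,
    laplacian_eq_sum_fderiv_fderiv b φ]
  simp only [second_deriv, Finset.sum_add_distrib, Finset.smul_sum, map_sum,
    OrthonormalBasis.map_apply]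

end LaplacianCalculus

section RadialFunctions

variable {x : E} {l : ℝ}

lemma contDiffAt_norm_rpow_of_ne_zero {n : WithTop ℕ∞} (hx : x ≠ 0) (p : ℝ) :
    ContDiffAt ℝ n (fun y : E ↦ ‖y‖ ^ p) x :=
  (contDiffAt_norm ℝ hx).rpow_const_of_ne (norm_ne_zero_iff.mpr hx)

lemma fderiv_norm_rpow_of_ne_zero (hx : x ≠ 0) (p : ℝ) (v : E) :
    fderiv ℝ (fun y ↦ ‖y‖ ^ p) x v = p * ‖x‖ ^ (p - 2) * ⟪x, v⟫ := by
  have norm_rpow (y : E) : ‖y‖ ^ p = (‖y‖ ^ 2) ^ (p / 2) := by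
    rw [← rpow_natCast_mul (norm_nonneg y), Nat.cast_ofNat, mul_div_cancel₀ p two_ne_zero]
  have hx₂ : (‖x‖ ^ 2) ^ (p / 2 - 1) = ‖x‖ ^ (p - 2) := by
    rw [← rpow_natCast_mul (norm_nonneg x)]
    ring_nf
  have hderiv := (hasStrictFDerivAt_norm_sq x).hasFDerivAt.rpow_const (p := p / 2)
    (Or.inl (pow_ne_zero 2 (norm_ne_zero_iff.mpr hx)))
  simp only [norm_rpow, hderiv.fderiv, hx₂, smul_apply, innerSL_apply_apply, smul_eq_mul,
    nsmul_eq_mul, Nat.cast_ofNat]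
  ring

lemma inversion_zero_eq_smul (l : ℝ) (y : E) : inversion 0 l y = (l / ‖y‖) ^ 2 • y := by
  simp [inversion]

lemma norm_inversion_zero (l : ℝ) (y : E) : ‖inversion 0 l y‖ = l ^ 2 / ‖y‖ := by
  simpa using dist_inversion_center (0 : E) y l

lemma contDiffAt_inversion_zero {n : ℕ∞} (hx : x ≠ 0) (l : ℝ) :
    ContDiffAt ℝ n (inversion (0 : E) l) x :=
  ContDiffAt.inversion (n := n) contDiffAt_const contDiffAt_const contDiffAt_id hx

variable [FiniteDimensional ℝ E]

lemma laplacian_norm_rpow (hx : x ≠ 0) (p : ℝ) :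
    Δ (fun y : E ↦ ‖y‖ ^ p) x = p * (p + finrank ℝ E - 2) * ‖x‖ ^ (p - 2) := by
  let b := stdOrthonormalBasis ℝ E
  have hx₀ : 0 < ‖x‖ := norm_pos_iff.mpr hx
  have second_deriv (v : E) : fderiv ℝ (fun y ↦ fderiv ℝ (fun z : E ↦ ‖z‖ ^ p) y v) x v =
      p * ‖x‖ ^ (p - 2) * ‖v‖ ^ 2 + p * (p - 2) * ‖x‖ ^ (p - 2 - 2) * ⟪x, v⟫ ^ 2 := by
    have first_deriv : (fun y ↦ fderiv ℝ (fun z : E ↦ ‖z‖ ^ p) y v) =ᶠ[𝓝 x]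
        fun y ↦ p * (‖y‖ ^ (p - 2) * innerSL ℝ v y) := by
      filter_upwards [eventually_ne_nhds hx] with y hy
      rw [fderiv_norm_rpow_of_ne_zero hy, innerSL_apply_apply, real_inner_comm, mul_assoc]
    have hpow : DifferentiableAt ℝ (fun y : E ↦ ‖y‖ ^ (p - 2)) x :=
      (contDiffAt_norm_rpow_of_ne_zero hx _).differentiableAt one_ne_zero
    rw [first_deriv.fderiv_eq, fderiv_const_mul (by fun_prop), fderiv_fun_mul hpow (by fun_prop),
      ContinuousLinearMap.fderiv]
    simp only [smul_apply, add_apply, smul_eq_mul, fderiv_norm_rpow_of_ne_zero hx,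
      innerSL_apply_apply, real_inner_self_eq_norm_sq, real_inner_comm x v]
    ring
  have parseval : ∑ i, ⟪x, b i⟫ ^ 2 = ‖x‖ ^ 2 := by
    simpa [real_inner_comm] using b.sum_sq_norm_inner_right x
  have hpow : ‖x‖ ^ (p - 2 - 2) * ‖x‖ ^ 2 = ‖x‖ ^ (p - 2) := by
    rw [← rpow_natCast, ← rpow_add hx₀]
    norm_num
  rw [laplacian_eq_sum_fderiv_apply b (contDiffAt_norm_rpow_of_ne_zero hx p)]
  simp only [second_deriv, b.norm_eq_one, Finset.sum_add_distrib, ← Finset.mul_sum, parseval,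
    Finset.sum_const, Finset.card_univ, Fintype.card_fin, nsmul_eq_mul]
  linear_combination p * (p - 2) * hpow

lemma laplacian_inversion_zero (hx : x ≠ 0) (l : ℝ) :
    Δ (inversion (0 : E) l) x = (-2 * (finrank ℝ E - 2) * l ^ 2 * ‖x‖ ^ (-4 : ℝ)) • x := by
  let b := stdOrthonormalBasis ℝ E
  have inversion_eq : inversion (0 : E) l = l ^ 2 • fun y ↦ ‖y‖ ^ (-2 : ℝ) • y := by
    ext y
    rw [inversion_zero_eq_smul, Pi.smul_apply, smul_smul, div_pow, div_eq_mul_inv,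
      rpow_neg (norm_nonneg y), rpow_two]
  have expansion : ∑ i, ⟪x, b i⟫ • b i = x := by
    simpa only [real_inner_comm] using b.sum_repr' x
  have laplacian_id : Δ (fun y : E ↦ y) x = 0 := by
    have fderiv_id_const : fderiv ℝ (fun y : E ↦ y) = fun _ ↦ .id ℝ E := funext fun _ ↦ fderiv_id
    simp [laplacian_eq_sum_fderiv_fderiv b, fderiv_id_const]
  have hpow := contDiffAt_norm_rpow_of_ne_zero (n := 2) hx (-2)
  have hsmul : ContDiffAt ℝ 2 (fun y : E ↦ ‖y‖ ^ (-2 : ℝ) • y) x := hpow.smul contDiffAt_id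
  rw [inversion_eq, InnerProductSpace.laplacian_smul _ hsmul,
    laplacian_smul_of_contDiffAt b (g := fun y ↦ y) hpow contDiffAt_id, laplacian_norm_rpow hx]
  simp only [laplacian_id, fderiv_norm_rpow_of_ne_zero hx, fderiv_fun_id,
    ContinuousLinearMap.id_apply, mul_smul _ ⟪x, _⟫, ← Finset.smul_sum, expansion]
  norm_num
  module

theorem laplacian_norm_rpow_mul_comp_inversion {u : E → ℝ} (hx : x ≠ 0)
    (hu : ContDiffAt ℝ 2 u (inversion 0 l x)) :
    Δ (fun y ↦ ‖y‖ ^ (2 - finrank ℝ E : ℝ) * u (inversion 0 l y)) x =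
      (l / ‖x‖) ^ 4 * ‖x‖ ^ (2 - finrank ℝ E : ℝ) * Δ u (inversion 0 l x) := by
  let b := stdOrthonormalBasis ℝ E
  have hx₀ : 0 < ‖x‖ := norm_pos_iff.mpr hx
  have hinv := contDiffAt_inversion_zero (n := 2) hx l
  have hDinv : fderiv ℝ (inversion (0 : E) l) x =
      (l / ‖x‖) ^ 2 • ((ℝ ∙ x)ᗮ.reflection : E →L[ℝ] E) := by
    simpa using (hasFDerivAt_inversion (R := l) hx).fderiv
  have laplacian_comp := laplacian_comp_of_fderiv_eq_smul (R := (ℝ ∙ x)ᗮ.reflection) hu hinv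
    fun v ↦ congrArg (· v) hDinv
  have radial_deriv :
      ∑ i, ⟪x, b i⟫ * fderiv ℝ (fun y ↦ u (inversion 0 l y)) x (b i) =
        -(l / ‖x‖) ^ 2 * fderiv ℝ u (inversion 0 l x) x := by
    have expansion : ∑ i, ⟪x, b i⟫ • b i = x := by
      simpa only [real_inner_comm] using b.sum_repr' x
    have chain_rule : fderiv ℝ (fun y ↦ u (inversion 0 l y)) x =
        (fderiv ℝ u (inversion 0 l x)).comp (fderiv ℝ (inversion 0 l) x) :=
      fderiv_comp x (hu.differentiableAt two_ne_zero) (hinv.differentiableAt two_ne_zero)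
    simp only [← smul_eq_mul, ← map_smul, ← map_sum, expansion]
    simp [chain_rule, hDinv, Submodule.reflection_orthogonalComplement_singleton_eq_neg]
  have hpow : ‖x‖ ^ (2 - finrank ℝ E : ℝ) * ‖x‖ ^ (-4 : ℝ) =
      ‖x‖ ^ (2 - finrank ℝ E - 2 : ℝ) * (‖x‖ ^ 2)⁻¹ := by
    rw [← rpow_two, ← rpow_neg hx₀.le, ← rpow_add hx₀, ← rpow_add hx₀]
    ring_nf
  have product_rule := laplacian_smul_of_contDiffAt b (g := fun y ↦ u (inversion 0 l y))
    (contDiffAt_norm_rpow_of_ne_zero hx (2 - finrank ℝ E : ℝ)) (hu.comp x hinv)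
  simp only [smul_eq_mul, laplacian_comp, laplacian_norm_rpow hx, fderiv_norm_rpow_of_ne_zero hx,
    mul_assoc _ ⟪x, _⟫, ← Finset.mul_sum, radial_deriv, laplacian_inversion_zero hx,
    map_smul] at product_rule
  rw [product_rule]
  linear_combination (-2 * (finrank ℝ E - 2) * l ^ 2 * fderiv ℝ u (inversion 0 l x) x) * hpow

lemma laplacian_sqrt_div_norm (hE : finrank ℝ E = 3) (hl : 0 ≤ l) (hx : x ≠ 0) :
    Δ (fun y : E ↦ √(l / ‖y‖)) x = -(√(l / ‖x‖) / (4 * ‖x‖ ^ 2)) := by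
  have hx₀ : 0 < ‖x‖ := norm_pos_iff.mpr hx
  have sqrt_eq (y : E) : √(l / ‖y‖) = √l * ‖y‖ ^ (-1 / 2 : ℝ) := by
    rw [sqrt_div hl, sqrt_eq_rpow ‖y‖, neg_div, rpow_neg (norm_nonneg y), div_eq_mul_inv]
  have hpow : ‖x‖ ^ (-1 / 2 - 2 : ℝ) = ‖x‖ ^ (-1 / 2 : ℝ) / ‖x‖ ^ 2 := by
    rw [rpow_sub hx₀, rpow_two]
  have hsmul := InnerProductSpace.laplacian_smul (√l)
    (contDiffAt_norm_rpow_of_ne_zero (n := 2) hx (-1 / 2))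
  simp only [sqrt_eq]
  refine hsmul.trans ?_
  rw [laplacian_norm_rpow hx, hE, hpow, smul_eq_mul]
  push_cast
  ring

end RadialFunctions

section MinimumPrinciple

variable {x : E}

lemma deriv_deriv_nonneg_of_isLocalMin {g : ℝ → ℝ} {t : ℝ} (hg : ContinuousAt g t)
    (hmin : IsLocalMin g t) : 0 ≤ deriv (deriv g) t := by
  by_contra! hneg
  have hmax : IsLocalMax g t := isLocalMax_of_deriv_deriv_neg hneg hmin.deriv_eq_zero hg
  have hconst : g =ᶠ[𝓝 t] fun _ ↦ g t := by
    filter_upwards [hmin, hmax] with r hge hle using le_antisymm hle hge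
  have hzero : deriv (deriv g) t = 0 := by
    rw [hconst.deriv.deriv_eq]
    simp
  exact hneg.ne hzero

lemma fderiv_fderiv_nonneg_of_isLocalMin {f : E → ℝ} (hf : ContDiffAt ℝ 2 f x)
    (hmin : IsLocalMin f x) (v : E) : 0 ≤ fderiv ℝ (fderiv ℝ f) x v v := by
  have hline (t : ℝ) : HasDerivAt (fun t : ℝ ↦ x + t • v) v t := by
    simpa using ((hasDerivAt_id t).smul_const v).const_add x
  have hline_tendsto : Tendsto (fun t : ℝ ↦ x + t • v) (𝓝 0) (𝓝 x) := by
    simpa using (hline 0).continuousAt.tendsto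
  have first_deriv : deriv (fun t : ℝ ↦ f (x + t • v)) =ᶠ[𝓝 0]
      fun t ↦ fderiv ℝ f (x + t • v) v := by
    filter_upwards [hline_tendsto.eventually (eventually_differentiableAt_of_contDiffAt_two hf)]
      with t ht using (ht.hasFDerivAt.comp_hasDerivAt t (hline t)).deriv
  have second_deriv : HasDerivAt (fun t : ℝ ↦ fderiv ℝ f (x + t • v) v)
      (fderiv ℝ (fderiv ℝ f) x v v) 0 := by
    have hf₂ : HasFDerivAt (fderiv ℝ f) (fderiv ℝ (fderiv ℝ f) x) (x + (0 : ℝ) • v) := by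
      simpa using (differentiableAt_fderiv_of_contDiffAt_two hf).hasFDerivAt
    have hcomp : HasDerivAt (fun t : ℝ ↦ fderiv ℝ f (x + t • v)) (fderiv ℝ (fderiv ℝ f) x v) 0 :=
      hf₂.comp_hasDerivAt 0 (hline 0)
    simpa using hcomp.clm_apply (hasDerivAt_const 0 v)
  rw [← second_deriv.deriv, ← first_deriv.deriv_eq]
  refine deriv_deriv_nonneg_of_isLocalMin ?_ ?_
  · exact ContinuousAt.comp (by simpa using hf.continuousAt) (hline 0).continuousAt
  · filter_upwards [hline_tendsto.eventually hmin] with t ht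
    simpa using ht

variable [FiniteDimensional ℝ E]

lemma laplacian_nonneg_of_isLocalMin {f : E → ℝ} (hf : ContDiffAt ℝ 2 f x)
    (hmin : IsLocalMin f x) : 0 ≤ Δ f x := by
  rw [laplacian_eq_sum_fderiv_fderiv (stdOrthonormalBasis ℝ E)]
  exact Finset.sum_nonneg fun i _ ↦ fderiv_fderiv_nonneg_of_isLocalMin hf hmin _

lemma nonneg_of_laplacian_neg {f : E → ℝ} {S U : Set E} (hS : IsCompact S) (hU : IsOpen U)
    (hUS : U ⊆ S) (hf : ContinuousOn f S) (hf₂ : ∀ y ∈ U, ContDiffAt ℝ 2 f y)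
    (hneg : ∀ y ∈ U, Δ f y < 0) (hbdry : ∀ y ∈ S \ U, 0 ≤ f y) {y : E} (hy : y ∈ S) :
    0 ≤ f y := by
  obtain ⟨x, hxS, hmin⟩ := hS.exists_isMinOn ⟨y, hy⟩ hf
  have hxU : x ∉ U := fun hxU ↦ (hneg x hxU).not_ge <|
    laplacian_nonneg_of_isLocalMin (hf₂ x hxU)
      (hmin.isLocalMin (mem_of_superset (hU.mem_nhds hxU) hUS))
  exact (hbdry x ⟨hxS, hxU⟩).trans (hmin hy)

end MinimumPrinciple

section MovingSpheres

/-- The Kelvin transform of `u` across the sphere of radius `l` about the origin, with the weight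
`l / ‖y‖` of dimension three. -/
noncomputable def kelvinTransform (l : ℝ) (u : E → ℝ) (y : E) : ℝ :=
  l / ‖y‖ * u (inversion 0 l y)

/-- The excess of `u` over its Kelvin transform and over the multiple `H` of the barrier
`1 - √(l / ‖y‖)`, which vanishes on the sphere of radius `l` and is subharmonic in dimension
three. -/
noncomputable def sphereGap (H l : ℝ) (u : E → ℝ) (y : E) : ℝ :=
  u y - kelvinTransform l u y - H * (1 - √(l / ‖y‖))

/-- The moving-sphere inequality holds at radius `l`, throughout the shell `l ≤ ‖y‖ ≤ R`. -/
def IsAdmissible (u : E → ℝ) (H R l : ℝ) : Prop :=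
  ∀ y, l ≤ ‖y‖ → ‖y‖ ≤ R → 0 ≤ sphereGap H l u y

/-- The derivative at `t = 1` of the scaling `√t * u (t • y)`, which preserves `-Δu = V u⁵` with `V`
constant in dimension three. -/
noncomputable def scalingDeriv (u : E → ℝ) (y : E) : ℝ :=
  fderiv ℝ u y y + u y / 2

variable {u : E → ℝ} {y : E} {H R L l κ : ℝ}

lemma norm_inversion_zero_le (hl : 0 ≤ l) (hly : l ≤ ‖y‖) : ‖inversion 0 l y‖ ≤ l := by
  rw [norm_inversion_zero, sq, mul_div_assoc]
  exact mul_le_of_le_one_right hl (div_le_one_of_le₀ hly (norm_nonneg y))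

lemma sphereGap_of_norm_eq (hl : 0 < l) (hy : ‖y‖ = l) : sphereGap H l u y = 0 := by
  have hinv : inversion 0 l y = y := inversion_of_mem_sphere (by simpa using hy)
  simp [sphereGap, kelvinTransform, hinv, hy, hl.ne']

lemma sphereGap_sub_const (q : ℝ) :
    sphereGap H l (fun z ↦ u z - q) y = sphereGap H l u y - q * (1 - l / ‖y‖) := by
  simp only [sphereGap, kelvinTransform]
  ring

lemma scalingDeriv_sub_const (q : ℝ) :
    scalingDeriv (fun z ↦ u z - q) y = scalingDeriv u y - q / 2 := by
  simp only [scalingDeriv, fderiv_sub_const]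
  ring

lemma continuousAt_scalingDeriv (hu : ContDiffAt ℝ 1 u y) : ContinuousAt (scalingDeriv u) y :=
  ((hu.continuousAt_fderiv one_ne_zero).clm_apply continuousAt_id).add (hu.continuousAt.div_const 2)

lemma continuousAt_sphereGap (hy : y ≠ 0) (hu : ContinuousAt u y)
    (hu_inv : ContinuousAt u (inversion 0 l y)) :
    ContinuousAt (fun p : ℝ × E ↦ sphereGap H p.1 u p.2) (l, y) := by
  have hratio : ContinuousAt (fun p : ℝ × E ↦ p.1 / ‖p.2‖) (l, y) :=
    continuousAt_fst.div continuousAt_snd.norm (norm_ne_zero_iff.mpr hy)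
  have hinv : ContinuousAt (fun p : ℝ × E ↦ inversion 0 p.1 p.2) (l, y) :=
    continuousAt_const.inversion continuousAt_fst continuousAt_snd hy
  have hcomp : ContinuousAt (fun p : ℝ × E ↦ u (inversion 0 p.1 p.2)) (l, y) :=
    ContinuousAt.comp (f := fun p : ℝ × E ↦ inversion 0 p.1 p.2) hu_inv hinv
  have hu_snd : ContinuousAt (fun p : ℝ × E ↦ u p.2) (l, y) :=
    ContinuousAt.comp (f := Prod.snd) hu continuousAt_snd
  exact (hu_snd.sub (hratio.mul hcomp)).sub
    (continuousAt_const.mul (continuousAt_const.sub hratio.sqrt))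

/- `t ↦ √t * (u (t • y) - κ)` is monotone on `[x², 1]`. -/
lemma mul_one_sub_le_of_le_scalingDeriv {x : ℝ} (hx₀ : 0 < x) (hx₁ : x ≤ 1)
    (hu : ∀ t ∈ Icc (x ^ 2) 1, DifferentiableAt ℝ u (t • y))
    (hκ : ∀ t ∈ Icc (x ^ 2) 1, κ / 2 ≤ scalingDeriv u (t • y)) :
    κ * (1 - x) ≤ u y - x * u (x ^ 2 • y) := by
  have hderiv : ∀ t ∈ Icc (x ^ 2) 1, HasDerivAt (fun t ↦ √t * (u (t • y) - κ))
      ((scalingDeriv u (t • y) - κ / 2) / √t) t := by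
    intro t ht
    have ht₀ : 0 < t := (by positivity : 0 < x ^ 2).trans_le ht.1
    have hline : HasDerivAt (fun t : ℝ ↦ t • y) y t := by
      simpa using (hasDerivAt_id t).smul_const y
    have hmul := (hasDerivAt_sqrt ht₀.ne').mul
      (((hu t ht).hasFDerivAt.comp_hasDerivAt t hline).sub_const κ)
    refine hmul.congr_deriv ?_
    rw [scalingDeriv, map_smul, smul_eq_mul, Function.comp_apply]
    field_simp
    rw [sq_sqrt ht₀.le]
    ring
  have hmono : MonotoneOn (fun t ↦ √t * (u (t • y) - κ)) (Icc (x ^ 2) 1) := by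
    refine monotoneOn_of_deriv_nonneg (convex_Icc _ _)
      (fun t ht ↦ (hderiv t ht).continuousAt.continuousWithinAt)
      (fun t ht ↦ (hderiv t (interior_subset ht)).differentiableAt.differentiableWithinAt)
      fun t ht ↦ ?_
    rw [(hderiv t (interior_subset ht)).deriv]
    exact div_nonneg (sub_nonneg.mpr (hκ t (interior_subset ht))) (sqrt_nonneg t)
  have hle : x ^ 2 ≤ 1 := pow_le_one₀ hx₀.le hx₁
  have hends := hmono (left_mem_Icc.mpr hle) (right_mem_Icc.mpr hle) hle
  simp only [sqrt_sq hx₀.le, sqrt_one, one_smul] at hends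
  linarith

lemma sphereGap_nonneg_of_le_scalingDeriv (hl : 0 < l) (hly : l ≤ ‖y‖)
    (hu : ∀ t ∈ Icc ((l / ‖y‖) ^ 2) 1, DifferentiableAt ℝ u (t • y))
    (hκ : ∀ t ∈ Icc ((l / ‖y‖) ^ 2) 1, κ / 2 ≤ scalingDeriv u (t • y))
    (hH : H ≤ κ * (1 + √(l / ‖y‖))) : 0 ≤ sphereGap H l u y := by
  have hx₀ : 0 < l / ‖y‖ := div_pos hl (hl.trans_le hly)
  have hx₁ : l / ‖y‖ ≤ 1 := div_le_one_of_le₀ hly (norm_nonneg y)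
  have hgrowth := mul_one_sub_le_of_le_scalingDeriv hx₀ hx₁ hu hκ
  have hbarrier : H * (1 - √(l / ‖y‖)) ≤ κ * (1 - l / ‖y‖) :=
    calc H * (1 - √(l / ‖y‖)) ≤ κ * (1 + √(l / ‖y‖)) * (1 - √(l / ‖y‖)) :=
          mul_le_mul_of_nonneg_right hH (sub_nonneg.mpr (sqrt_le_one.mpr hx₁))
      _ = κ * (1 - √(l / ‖y‖) ^ 2) := by ring
      _ = κ * (1 - l / ‖y‖) := by rw [sq_sqrt hx₀.le]
  rw [sphereGap, kelvinTransform, inversion_zero_eq_smul]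
  linarith

lemma smul_mem_of_convex_of_inversion_mem {S : Set E} (hS : Convex ℝ S) (hy : y ∈ S)
    (hinv : inversion 0 l y ∈ S) {t : ℝ} (ht : t ∈ Icc ((l / ‖y‖) ^ 2) 1) : t • y ∈ S := by
  have hconvex : Convex ℝ {t : ℝ | t • y ∈ S} :=
    hS.linear_preimage (LinearMap.toSpanSingleton ℝ E y)
  exact hconvex.ordConnected.out (mem_ofPred.mpr (by rwa [← inversion_zero_eq_smul]))
    (mem_ofPred.mpr (by rwa [one_smul])) ht

lemma eventually_sphereGap_nonneg_of_norm_eq (hl : 0 < l) (hy : ‖y‖ = l) (hu : ContDiffAt ℝ 1 u y)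
    (hH : H / 4 < scalingDeriv u y) :
    ∀ᶠ p : ℝ × E in 𝓝 (l, y), p.1 ≤ ‖p.2‖ → 0 ≤ sphereGap H p.1 u p.2 := by
  have hy₀ : ‖y‖ ≠ 0 := (hl.trans_eq hy.symm).ne'
  obtain ⟨κ, hHκ, hκ⟩ : ∃ κ, H / 2 < κ ∧ κ < 2 * scalingDeriv u y := exists_between (by linarith)
  obtain ⟨ε, hε, hball⟩ := eventually_nhds_iff_ball.mp <|
    ((hu.eventually (by simp)).and
      ((continuousAt_scalingDeriv hu).eventually (lt_mem_nhds (by linarith : κ / 2 < _))))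
  have hinv : Tendsto (fun p : ℝ × E ↦ inversion 0 p.1 p.2) (𝓝 (l, y)) (𝓝 y) := by
    have hinv_y : inversion 0 l y = y := inversion_of_mem_sphere (by simpa using hy)
    nth_rw 2 [← hinv_y]
    exact continuousAt_const.inversion continuousAt_fst continuousAt_snd (norm_ne_zero_iff.mp hy₀)
  have hbarrier : ContinuousAt (fun p : ℝ × E ↦ κ * (1 + √(p.1 / ‖p.2‖))) (l, y) :=
    continuousAt_const.mul (continuousAt_const.add
      (continuousAt_fst.div continuousAt_snd.norm hy₀).sqrt)
  have hH_lt : H < κ * (1 + √(l / ‖y‖)) := by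
    rw [hy, div_self hl.ne', sqrt_one]
    linarith
  filter_upwards [continuousAt_fst.eventually (lt_mem_nhds hl),
    continuousAt_snd.eventually (ball_mem_nhds y hε),
    hinv.eventually (ball_mem_nhds y hε),
    hbarrier.eventually (lt_mem_nhds hH_lt)]
    with p hp hp_ball hp_inv hp_barrier hle
  have hseg := fun t ht ↦ hball _
    (smul_mem_of_convex_of_inversion_mem (convex_ball y ε) hp_ball hp_inv (t := t) ht)
  exact sphereGap_nonneg_of_le_scalingDeriv hp hle
    (fun t ht ↦ (hseg t ht).1.differentiableAt one_ne_zero) (fun t ht ↦ (hseg t ht).2.le)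
    hp_barrier.le

lemma eventually_sphereGap_nonneg_zero (hH₀ : 0 ≤ H) (hu : ContDiffAt ℝ 1 u 0) (hH : H < u 0) :
    ∀ᶠ p : ℝ × E in 𝓝 (0, 0), 0 < p.1 → p.1 ≤ ‖p.2‖ → 0 ≤ sphereGap H p.1 u p.2 := by
  have hscaling : H / 2 < scalingDeriv u 0 := by simpa [scalingDeriv] using by linarith
  obtain ⟨ε, hε, hball⟩ := eventually_nhds_iff_ball.mp <|
    ((hu.eventually (by simp)).and
      ((continuousAt_scalingDeriv hu).eventually (lt_mem_nhds hscaling)))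
  filter_upwards [continuousAt_snd.eventually (ball_mem_nhds (0 : E) hε)] with p hp_ball hp hle
  have hp_inv : inversion 0 p.1 p.2 ∈ ball (0 : E) ε := by
    rw [mem_ball_zero_iff]
    exact (norm_inversion_zero_le hp.le hle).trans_lt
      (hle.trans_lt (mem_ball_zero_iff.mp hp_ball))
  have hseg := fun t ht ↦ hball _
    (smul_mem_of_convex_of_inversion_mem (convex_ball 0 ε) hp_ball hp_inv (t := t) ht)
  exact sphereGap_nonneg_of_le_scalingDeriv hp hle
    (fun t ht ↦ (hseg t ht).1.differentiableAt one_ne_zero) (fun t ht ↦ (hseg t ht).2.le)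
    (le_mul_of_one_le_right hH₀ (le_add_of_nonneg_right (sqrt_nonneg _)))

lemma sphereGap_smul (hl : 0 < l) (hy : ‖y‖ = l) {t : ℝ} (ht : 0 < t) :
    sphereGap H l u (t • y) = u (t • y) - t⁻¹ * u (t⁻¹ • y) - H * (1 - √t⁻¹) := by
  have hratio : l / ‖t • y‖ = t⁻¹ := by
    rw [norm_smul, norm_of_nonneg ht.le, hy]
    field_simp
  have hsmul : t⁻¹ ^ 2 * t = t⁻¹ := by field_simp
  rw [sphereGap, kelvinTransform, inversion_zero_eq_smul, hratio, smul_smul, hsmul]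

lemma hasDerivAt_sphereGap_smul (hl : 0 < l) (hy : ‖y‖ = l) (hu : DifferentiableAt ℝ u y) :
    HasDerivAt (fun t : ℝ ↦ sphereGap H l u (t • y)) (2 * scalingDeriv u y - H / 2) 1 := by
  have hinv : HasDerivAt (fun t : ℝ ↦ t⁻¹) (-1) 1 := by
    simpa using hasDerivAt_inv (one_ne_zero (α := ℝ))
  have hsqrt : HasDerivAt (fun t : ℝ ↦ √t⁻¹) (-1 / 2) 1 := by
    simpa using hinv.sqrt (by simp)
  have hu_comp {c : ℝ → ℝ} {c' : ℝ} (hc : HasDerivAt c c' 1) (hc₁ : c 1 = 1) :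
      HasDerivAt (fun t ↦ u (c t • y)) (c' * fderiv ℝ u y y) 1 := by
    have hu₁ : HasFDerivAt u (fderiv ℝ u y) (c 1 • y) := by simpa [hc₁] using hu.hasFDerivAt
    have hcomp : HasDerivAt (fun t ↦ u (c t • y)) (fderiv ℝ u y (c' • y)) 1 :=
      hu₁.comp_hasDerivAt 1 (hc.smul_const y)
    simpa using hcomp
  have hgap := ((hu_comp (hasDerivAt_id 1) rfl).sub
    (hinv.mul (hu_comp hinv inv_one))).sub ((hsqrt.const_sub 1).const_mul H)
  refine (hgap.congr_deriv ?_).congr_of_eventuallyEq ?_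
  · simp only [scalingDeriv, inv_one, one_smul]
    ring
  · filter_upwards [lt_mem_nhds one_pos] with t ht using sphereGap_smul hl hy ht

lemma div_four_le_scalingDeriv_of_isAdmissible (hl : 0 < l) (hlR : l < R)
    (hadm : IsAdmissible u H R l) (hy : ‖y‖ = l) (hu : DifferentiableAt ℝ u y) :
    H / 4 ≤ scalingDeriv u y := by
  have hslope := (hasDerivAt_sphereGap_smul (H := H) hl hy hu).tendsto_slope_zero_right
  have hlim : 0 ≤ 2 * scalingDeriv u y - H / 2 := by
    refine ge_of_tendsto hslope ?_
    have hR : 0 < R / l - 1 := sub_pos.mpr ((one_lt_div hl).mpr hlR)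
    filter_upwards [Ioo_mem_nhdsGT hR] with t ht
    have hnorm : ‖(1 + t) • y‖ = (1 + t) * l := by
      rw [norm_smul, norm_of_nonneg (by linarith [ht.1]), hy]
    have hgap := hadm ((1 + t) • y) (hnorm ▸ le_mul_of_one_le_left hl.le (by linarith [ht.1]))
      (hnorm ▸ (le_div_iff₀ hl).mp (by linarith [ht.2]))
    rw [one_smul, sphereGap_of_norm_eq hl hy, sub_zero]
    exact smul_nonneg (inv_nonneg.mpr ht.1.le) hgap
  linarith

lemma inversion_zero_mem_closedBall (hl : 0 ≤ l) (hly : l ≤ ‖y‖) (hyR : ‖y‖ ≤ R) :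
    inversion 0 l y ∈ closedBall 0 R :=
  mem_closedBall_zero_iff.mpr ((norm_inversion_zero_le hl hly).trans (hly.trans hyR))

lemma isClosed_setOf_isAdmissible (hu : ∀ y ∈ closedBall (0 : E) R, ContinuousAt u y) :
    IsClosed {l | 0 < l → IsAdmissible u H R l} := by
  refine isClosed_iff_frequently.mpr fun l hfreq hl y hly hyR ↦ ?_
  rcases hly.eq_or_lt with heq | hlt
  · exact (sphereGap_of_norm_eq hl heq.symm).ge
  · have hcont : ContinuousAt (fun l' ↦ sphereGap H l' u y) l :=
      ContinuousAt.comp (f := fun l' : ℝ ↦ (l', y)) (x := l)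
        (continuousAt_sphereGap (norm_pos_iff.mp (hl.trans hlt))
          (hu y (mem_closedBall_zero_iff.mpr hyR))
          (hu _ (inversion_zero_mem_closedBall hl.le hly hyR)))
        (by fun_prop)
    refine ge_of_tendsto_of_frequently hcont ?_
    exact (hfreq.and_eventually (Ioo_mem_nhds hl hlt)).mono
      fun l' hl' ↦ hl'.1 hl'.2.1 y hl'.2.2.le hyR

variable [FiniteDimensional ℝ E]

lemma isCompact_shell (l R : ℝ) : IsCompact {y : E | l ≤ ‖y‖ ∧ ‖y‖ ≤ R} := by
  refine (isCompact_closedBall (0 : E) R).of_isClosed_subset ?_ fun y hy ↦ ?_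
  · exact (isClosed_le continuous_const continuous_norm).inter
      (isClosed_le continuous_norm continuous_const)
  · exact mem_closedBall_zero_iff.mpr hy.2

lemma eventually_isAdmissible_of_forall_eventually (hl : 0 ≤ l)
    (h : ∀ y, l ≤ ‖y‖ → ‖y‖ ≤ R → ∀ᶠ p : ℝ × E in 𝓝 (l, y),
      0 < p.1 → p.1 ≤ ‖p.2‖ → 0 ≤ sphereGap H p.1 u p.2) :
    ∀ᶠ l' in 𝓝[>] l, IsAdmissible u H R l' := by
  have hshell := (isCompact_shell l R).eventually_forall_of_forall_eventually
    (P := fun l' y ↦ 0 < l' → l' ≤ ‖y‖ → 0 ≤ sphereGap H l' u y) fun y hy ↦ h y hy.1 hy.2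
  filter_upwards [nhdsWithin_le_nhds hshell, self_mem_nhdsWithin] with l' hl' hgt y hly hyR
  exact hl' y ⟨(le_of_lt hgt).trans hly, hyR⟩ (hl.trans_lt hgt) hly

lemma eventually_isAdmissible_zero (hH₀ : 0 ≤ H)
    (hu : ∀ y ∈ closedBall (0 : E) R, ContDiffAt ℝ 1 u y)
    (hH : ∀ y ∈ closedBall (0 : E) R, H < u y) : ∀ᶠ l in 𝓝[>] 0, IsAdmissible u H R l := by
  refine eventually_isAdmissible_of_forall_eventually le_rfl fun y _ hyR ↦ ?_
  have hzero : (0 : E) ∈ closedBall 0 R := mem_closedBall_self ((norm_nonneg y).trans hyR)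
  rcases eq_or_ne y 0 with rfl | hy
  · exact eventually_sphereGap_nonneg_zero hH₀ (hu 0 hzero) (hH 0 hzero)
  · have hyR : y ∈ closedBall 0 R := mem_closedBall_zero_iff.mpr hyR
    have hcont : ContinuousAt (fun p : ℝ × E ↦ sphereGap H p.1 u p.2) (0, y) :=
      continuousAt_sphereGap hy (hu y hyR).continuousAt (by simpa using (hu 0 hzero).continuousAt)
    have hpos : 0 < sphereGap H 0 u y := by simpa [sphereGap, kelvinTransform] using hH y hyR
    filter_upwards [hcont.eventually (lt_mem_nhds hpos)] with p hp _ _ using hp.le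

lemma eventually_isAdmissible_of_sub_const {q : ℝ} (hl : 0 < l) (hlR : l < R) (hq : 0 < q)
    (hu : ∀ y ∈ closedBall (0 : E) R, ContDiffAt ℝ 1 u y)
    (hadm : IsAdmissible (fun y ↦ u y - q) H R l) : ∀ᶠ l' in 𝓝[>] l, IsAdmissible u H R l' := by
  refine eventually_isAdmissible_of_forall_eventually hl.le fun y hly hyR ↦ ?_
  have huy := hu y (mem_closedBall_zero_iff.mpr hyR)
  rcases hly.eq_or_lt with heq | hlt
  · have hslope : H / 4 < scalingDeriv u y := by
      have hsub := div_four_le_scalingDeriv_of_isAdmissible hl hlR hadm heq.symm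
        ((huy.differentiableAt one_ne_zero).sub_const q)
      rw [scalingDeriv_sub_const] at hsub
      linarith
    filter_upwards [eventually_sphereGap_nonneg_of_norm_eq hl heq.symm huy hslope]
      with p hp _ using hp
  · have hy : 0 < ‖y‖ := hl.trans hlt
    have hpos : 0 < sphereGap H l u y := by
      have hgap := hadm y hly hyR
      rw [sphereGap_sub_const] at hgap
      have hq' : 0 < q * (1 - l / ‖y‖) := mul_pos hq (sub_pos.mpr ((div_lt_one hy).mpr hlt))
      linarith
    have hcont : ContinuousAt (fun p : ℝ × E ↦ sphereGap H p.1 u p.2) (l, y) :=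
      continuousAt_sphereGap (norm_pos_iff.mp hy) huy.continuousAt
        (hu _ (inversion_zero_mem_closedBall hl.le hly hyR)).continuousAt
    filter_upwards [hcont.eventually (lt_mem_nhds hpos)] with p hp _ _ using hp.le

theorem isAdmissible_of_forall_isAdmissible_sub_const {q : ℝ} (hH₀ : 0 ≤ H) (hLR : L < R)
    (hq : 0 < q) (hu : ∀ y ∈ closedBall (0 : E) R, ContDiffAt ℝ 1 u y)
    (hH : ∀ y ∈ closedBall (0 : E) R, H < u y)
    (himprove : ∀ l ∈ Ioc 0 L, IsAdmissible u H R l → IsAdmissible (fun y ↦ u y - q) H R l)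
    (hl : l ∈ Ioc 0 L) : IsAdmissible u H R l := by
  have hclosed := isClosed_setOf_isAdmissible (H := H) fun y hy ↦ (hu y hy).continuousAt
  refine (hclosed.inter isClosed_Icc).Icc_subset_of_forall_mem_nhdsWithin
    (fun h ↦ absurd h (lt_irrefl 0)) (fun l' ⟨hadm, hl'⟩ ↦ ?_) (Ioc_subset_Icc_self hl) hl.1
  have hnext : ∀ᶠ l'' in 𝓝[>] l', IsAdmissible u H R l'' := by
    rcases hl'.1.eq_or_lt with rfl | hpos
    · exact eventually_isAdmissible_zero hH₀ hu hH
    · exact eventually_isAdmissible_of_sub_const hpos (hl'.2.trans hLR) hq hu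
        (himprove l' ⟨hpos, hl'.2.le⟩ (hadm hpos))
  exact hnext.mono fun _ h _ ↦ h

end MovingSpheres

section ScalarCurvatureEquation

/-- `u` is a `C²` solution of `-Δu = V u⁵` on `U`, bounded below by `m`, whose coefficient `V` is
bounded below by `a` and `s`-Hölder continuous with constant `A`. Regularity is required at each
point of `U` rather than relative to `U`, so that `U` need not be open. -/
structure IsSolutionOn [FiniteDimensional ℝ E] (V u : E → ℝ) (a A s m : ℝ) (U : Set E) : Prop where
  le_coeff : ∀ x ∈ U, a ≤ V x
  holder : ∀ x ∈ U, ∀ y ∈ U, |V x - V y| ≤ A * ‖x - y‖ ^ s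
  contDiffAt : ∀ x ∈ U, ContDiffAt ℝ 2 u x
  le_sol : ∀ x ∈ U, m ≤ u x
  neg_laplacian_eq : ∀ x ∈ U, -Δ u x = V x * u x ^ 5

variable {u V : E → ℝ} {x y : E} {U : Set E} {A C H L R a l m q s : ℝ}

lemma norm_inversion_zero_sub_le (hl : 0 ≤ l) (hly : l ≤ ‖y‖) : ‖inversion 0 l y - y‖ ≤ ‖y‖ := by
  have hx : (l / ‖y‖) ^ 2 ≤ 1 :=
    pow_le_one₀ (by positivity) (div_le_one_of_le₀ hly (norm_nonneg y))
  have hsmul : inversion 0 l y - y = -((1 - (l / ‖y‖) ^ 2) • y) := by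
    rw [inversion_zero_eq_smul]
    module
  rw [hsmul, norm_neg, norm_smul, norm_of_nonneg (sub_nonneg.mpr hx)]
  exact mul_le_of_le_one_left (norm_nonneg y) (sub_le_self _ (by positivity))

lemma kelvinTransform_le_of_sphereGap_nonneg (hH₀ : 0 ≤ H) (hly : l ≤ ‖y‖)
    (hgap : 0 ≤ sphereGap H l u y) : kelvinTransform l u y ≤ u y := by
  have hbarrier : 0 ≤ H * (1 - √(l / ‖y‖)) := mul_nonneg hH₀
    (sub_nonneg.mpr (sqrt_le_one.mpr (div_le_one_of_le₀ hly (norm_nonneg y))))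
  rw [sphereGap] at hgap
  linarith

lemma contDiffAt_kelvinTransform (hy : y ≠ 0) (hu_inv : ContDiffAt ℝ 2 u (inversion 0 l y)) :
    ContDiffAt ℝ 2 (kelvinTransform l u) y :=
  (contDiffAt_const.div (contDiffAt_norm ℝ hy) (norm_ne_zero_iff.mpr hy)).mul
    (hu_inv.comp y (contDiffAt_inversion_zero (n := 2) hy l))

lemma contDiffAt_sqrt_div_norm (hl : 0 < l) (hy : y ≠ 0) :
    ContDiffAt ℝ 2 (fun z : E ↦ √(l / ‖z‖)) y :=
  (contDiffAt_const.div (contDiffAt_norm ℝ hy) (norm_ne_zero_iff.mpr hy)).sqrt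
    (div_ne_zero hl.ne' (norm_ne_zero_iff.mpr hy))

lemma contDiffAt_barrier (hl : 0 < l) (hy : y ≠ 0) :
    ContDiffAt ℝ 2 (fun z : E ↦ H * (1 - √(l / ‖z‖))) y :=
  contDiffAt_const.mul (contDiffAt_const.sub (contDiffAt_sqrt_div_norm hl hy))

lemma contDiffAt_sphereGap (hl : 0 < l) (hy : y ≠ 0) (hu : ContDiffAt ℝ 2 u y)
    (hu_inv : ContDiffAt ℝ 2 u (inversion 0 l y)) : ContDiffAt ℝ 2 (sphereGap H l u) y :=
  (hu.sub (contDiffAt_kelvinTransform hy hu_inv)).sub (contDiffAt_barrier hl hy)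

lemma rpow_mul_div_pow_le {r : ℝ} (hl : 0 < l) (hlr : l ≤ r) (hlL : l ≤ L) (hs₀ : -2 ≤ s)
    (hs₁ : s ≤ 5 / 2) : r ^ s * (l / r) ^ 5 ≤ L ^ (2 + s) * (√(l / r) / r ^ 2) := by
  have hr : 0 < r := hl.trans_le hlr
  have hx : 0 < l / r := div_pos hl hr
  have hsplit : r ^ s * (l / r) ^ 5 = l ^ (2 + s) * ((l / r) ^ (3 - s) / r ^ 2) := by
    have hpow : (l / r) ^ 5 = (l / r) ^ (2 + s) * (l / r) ^ (3 - s) := by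
      rw [← rpow_add hx, ← rpow_natCast]
      norm_num
    rw [hpow, div_rpow hl.le hr.le (2 + s), rpow_add hr 2 s, rpow_two]
    field_simp
  have hx_pow : (l / r) ^ (3 - s) ≤ √(l / r) := by
    rw [sqrt_eq_rpow]
    exact rpow_le_rpow_of_exponent_ge hx (div_le_one_of_le₀ hlr hr.le) (by linarith)
  have hl_pow : l ^ (2 + s) ≤ L ^ (2 + s) := rpow_le_rpow hl.le hlL (by linarith)
  have hL : 0 < L := hl.trans_le hlL
  rw [hsplit]
  gcongr

lemma continuousOn_sphereGap (hl : 0 < l)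
    (hu : ∀ y ∈ closedBall (0 : E) R, ContinuousAt u y) :
    ContinuousOn (sphereGap H l u) {y | l ≤ ‖y‖ ∧ ‖y‖ ≤ R} := by
  intro y ⟨hly, hyR⟩
  have hgap : ContinuousAt (fun p : ℝ × E ↦ sphereGap H p.1 u p.2) (l, y) :=
    continuousAt_sphereGap (norm_pos_iff.mp (hl.trans_le hly))
      (hu y (mem_closedBall_zero_iff.mpr hyR)) (hu _ (inversion_zero_mem_closedBall hl.le hly hyR))
  exact (ContinuousAt.comp (f := fun y ↦ (l, y)) hgap (by fun_prop)).continuousWithinAt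

lemma sphereGap_nonneg_of_norm_eq (hl : 0 < l) (hlL : l ≤ L) (hlR : l ≤ R)
    (hy : ‖y‖ = R) (hC₀ : 0 ≤ C) (hC : u (inversion 0 l y) ≤ C) (hH₀ : 0 ≤ H)
    (hm : H + C * L / R ≤ u y) :
    0 ≤ sphereGap H l u y := by
  have hR : 0 < R := hl.trans_le hlR
  have hkelvin : kelvinTransform l u y ≤ C * L / R := by
    rw [kelvinTransform, hy, mul_div_assoc, mul_comm]
    gcongr
  have hbarrier : H * (1 - √(l / ‖y‖)) ≤ H :=
    mul_le_of_le_one_right hH₀ (sub_le_self _ (sqrt_nonneg _))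
  rw [sphereGap]
  linarith

lemma inversion_zero_sqrt_smul {e : E} {t : ℝ} (he : ‖e‖ = 1) (hL : 0 < L) (ht : 0 ≤ t) :
    inversion 0 √(L * (L + t)) ((L + t) • e) = L • e := by
  rw [inversion_zero_eq_smul, norm_smul, he, norm_of_nonneg (by positivity), mul_one, div_pow,
    sq_sqrt (by positivity), smul_smul]
  congr 1
  field_simp

lemma contDiffAt_comp_add_smul {c : ℝ} (hu : ContDiffAt ℝ 2 u (x + c • y)) :
    ContDiffAt ℝ 2 (fun z ↦ u (x + c • z)) y :=
  hu.comp y (contDiffAt_const.add (contDiffAt_const.smul contDiffAt_id))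

variable [FiniteDimensional ℝ E]

lemma IsSolutionOn.mono {U' : Set E} (hu : IsSolutionOn V u a A s m U) (h : U' ⊆ U) :
    IsSolutionOn V u a A s m U' where
  le_coeff x hx := hu.le_coeff x (h hx)
  holder x hx y hy := hu.holder x (h hx) y (h hy)
  contDiffAt x hx := hu.contDiffAt x (h hx)
  le_sol x hx := hu.le_sol x (h hx)
  neg_laplacian_eq x hx := hu.neg_laplacian_eq x (h hx)

lemma laplacian_kelvinTransform (hE : finrank ℝ E = 3) (hy : y ≠ 0)
    (hu_inv : ContDiffAt ℝ 2 u (inversion 0 l y)) :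
    Δ (kelvinTransform l u) y = (l / ‖y‖) ^ 5 * Δ u (inversion 0 l y) := by
  have hexp : (2 - finrank ℝ E : ℝ) = -1 := by rw [hE]; norm_num
  have kelvin_eq : kelvinTransform l u =
      l • fun z ↦ ‖z‖ ^ (2 - finrank ℝ E : ℝ) * u (inversion 0 l z) := by
    ext z
    rw [Pi.smul_apply, smul_eq_mul, hexp, rpow_neg_one, kelvinTransform, div_eq_mul_inv, mul_assoc]
  have hsmooth : ContDiffAt ℝ 2 (fun z ↦ ‖z‖ ^ (2 - finrank ℝ E : ℝ) * u (inversion 0 l z)) y :=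
    (contDiffAt_norm_rpow_of_ne_zero hy _).mul
      (hu_inv.comp y (contDiffAt_inversion_zero (n := 2) hy l))
  rw [kelvin_eq, InnerProductSpace.laplacian_smul l hsmooth,
    laplacian_norm_rpow_mul_comp_inversion hy hu_inv, hexp, rpow_neg_one, smul_eq_mul]
  ring

lemma laplacian_sub_const (u : E → ℝ) (q : ℝ) (y : E) : Δ (fun z ↦ u z - q) y = Δ u y := by
  have hfderiv : fderiv ℝ (fun z ↦ u z - q) = fderiv ℝ u := funext fun _ ↦ fderiv_sub_const q
  simp only [laplacian_eq_sum_fderiv_fderiv (stdOrthonormalBasis ℝ E), hfderiv]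

lemma laplacian_norm_sq (y : E) : Δ (fun z : E ↦ ‖z‖ ^ 2) y = 2 * finrank ℝ E := by
  have hfderiv : fderiv ℝ (fun z : E ↦ ‖z‖ ^ 2) = ⇑(2 • innerSL ℝ (E := E)) :=
    funext fun z ↦ (hasStrictFDerivAt_norm_sq z).hasFDerivAt.fderiv
  let b := stdOrthonormalBasis ℝ E
  rw [laplacian_eq_sum_fderiv_fderiv b, hfderiv, ContinuousLinearMap.fderiv]
  simp [innerSL_apply_apply ℝ, b.norm_eq_one, mul_comm]

lemma laplacian_add_mul_norm_sq (hu : ContDiffAt ℝ 2 u y) (c : ℝ) :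
    Δ (fun z ↦ u z + c * ‖z‖ ^ 2) y = Δ u y + c * (2 * finrank ℝ E) := by
  have hsq : ContDiffAt ℝ 2 (fun z : E ↦ ‖z‖ ^ 2) y := (contDiff_norm_sq ℝ).contDiffAt
  have hquad : ContDiffAt ℝ 2 (c • fun z : E ↦ ‖z‖ ^ 2) y := hsq.const_smul c
  have hsum := hu.laplacian_add hquad
  rw [InnerProductSpace.laplacian_smul _ hsq, laplacian_norm_sq] at hsum
  exact hsum

lemma laplacian_barrier (hE : finrank ℝ E = 3) (hl : 0 < l) (hy : y ≠ 0) :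
    Δ (fun z : E ↦ H * (1 - √(l / ‖z‖))) y = H / 4 * (√(l / ‖y‖) / ‖y‖ ^ 2) := by
  have barrier_eq : (fun z : E ↦ H * (1 - √(l / ‖z‖))) =
      fun z ↦ ((-H) • fun w : E ↦ √(l / ‖w‖)) z - -H := by
    ext z
    simp only [Pi.smul_apply, smul_eq_mul]
    ring
  rw [barrier_eq, laplacian_sub_const,
    InnerProductSpace.laplacian_smul _ (contDiffAt_sqrt_div_norm hl hy),
    laplacian_sqrt_div_norm hE hl.le hy, smul_eq_mul]
  ring

lemma laplacian_sphereGap (hE : finrank ℝ E = 3) (hl : 0 < l) (hy : y ≠ 0)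
    (hu : ContDiffAt ℝ 2 u y) (hu_inv : ContDiffAt ℝ 2 u (inversion 0 l y)) :
    Δ (sphereGap H l u) y =
      Δ u y - (l / ‖y‖) ^ 5 * Δ u (inversion 0 l y) - H / 4 * (√(l / ‖y‖) / ‖y‖ ^ 2) := by
  have hkelvin := contDiffAt_kelvinTransform hy hu_inv
  have hdiff : ContDiffAt ℝ 2 (u - kelvinTransform l u) y := hu.sub hkelvin
  have hsplit := hdiff.laplacian_sub (contDiffAt_barrier (H := H) hl hy)
  rw [hu.laplacian_sub hkelvin, laplacian_kelvinTransform hE hy hu_inv,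
    laplacian_barrier hE hl hy] at hsplit
  exact hsplit

lemma laplacian_sphereGap_sub_const (hE : finrank ℝ E = 3) (hl : 0 < l) (hy : y ≠ 0)
    (hu : ContDiffAt ℝ 2 u y) (hu_inv : ContDiffAt ℝ 2 u (inversion 0 l y)) :
    Δ (sphereGap H l fun z ↦ u z - q) y = Δ (sphereGap H l u) y := by
  rw [laplacian_sphereGap hE hl hy (hu.sub contDiffAt_const) (hu_inv.sub contDiffAt_const),
    laplacian_sphereGap hE hl hy hu hu_inv, laplacian_sub_const, laplacian_sub_const]

lemma laplacian_sphereGap_neg (hE : finrank ℝ E = 3) (hs₀ : 0 ≤ s) (hs₁ : s ≤ 5 / 2) (ha : 0 ≤ a)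
    (hA : 0 ≤ A) (hm : 0 ≤ m) (hu : IsSolutionOn V u a A s m U) (hl : 0 < l) (hlL : l ≤ L)
    (hly : l ≤ ‖y‖)
    (hy : y ∈ U) (hinv : inversion 0 l y ∈ U) (hC : u (inversion 0 l y) ≤ C) (hH₀ : 0 ≤ H)
    (hH : 4 * A * C ^ 5 * L ^ (2 + s) < H) (hgap : 0 ≤ sphereGap H l u y) :
    Δ (sphereGap H l u) y < 0 := by
  have hr : 0 < ‖y‖ := hl.trans_le hly
  have hx : 0 < l / ‖y‖ := div_pos hl hr
  have hkelvin₀ : 0 ≤ kelvinTransform l u y := mul_nonneg hx.le (hm.trans (hu.le_sol _ hinv))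
  have hkelvin_le_sol := kelvinTransform_le_of_sphereGap_nonneg hH₀ hly hgap
  have hosc : (V (inversion 0 l y) - V y) * kelvinTransform l u y ^ 5 ≤
      A * C ^ 5 * L ^ (2 + s) * (√(l / ‖y‖) / ‖y‖ ^ 2) :=
    calc (V (inversion 0 l y) - V y) * kelvinTransform l u y ^ 5
        ≤ A * ‖y‖ ^ s * (l / ‖y‖ * C) ^ 5 := by
          have hholder := (le_abs_self _).trans (hu.holder _ hinv _ hy)
          have hdist := norm_inversion_zero_sub_le hl.le hly
          have hkelvin_le : kelvinTransform l u y ≤ l / ‖y‖ * C :=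
            mul_le_mul_of_nonneg_left hC hx.le
          have hV : V (inversion 0 l y) - V y ≤ A * ‖y‖ ^ s := hholder.trans (by gcongr)
          gcongr
      _ = A * C ^ 5 * (‖y‖ ^ s * (l / ‖y‖) ^ 5) := by ring
      _ ≤ A * C ^ 5 * (L ^ (2 + s) * (√(l / ‖y‖) / ‖y‖ ^ 2)) := by
          have hC₀ : 0 ≤ C := (hm.trans (hu.le_sol _ hinv)).trans hC
          exact mul_le_mul_of_nonneg_left
            (rpow_mul_div_pow_le hl hly hlL (by linarith) hs₁) (by positivity)
      _ = _ := by ring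
  have hmono : V y * kelvinTransform l u y ^ 5 ≤ V y * u y ^ 5 :=
    mul_le_mul_of_nonneg_left (pow_le_pow_left₀ hkelvin₀ hkelvin_le_sol 5)
      (ha.trans (hu.le_coeff y hy))
  have hbarrier : A * C ^ 5 * L ^ (2 + s) * (√(l / ‖y‖) / ‖y‖ ^ 2) <
      H / 4 * (√(l / ‖y‖) / ‖y‖ ^ 2) :=
    mul_lt_mul_of_pos_right (by linarith) (div_pos (sqrt_pos.mpr hx) (by positivity))
  have heq : Δ (sphereGap H l u) y = -(V y * u y ^ 5) +
      V (inversion 0 l y) * kelvinTransform l u y ^ 5 - H / 4 * (√(l / ‖y‖) / ‖y‖ ^ 2) := by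
    rw [laplacian_sphereGap hE hl (norm_pos_iff.mp hr) (hu.contDiffAt y hy) (hu.contDiffAt _ hinv),
      kelvinTransform]
    linear_combination -hu.neg_laplacian_eq y hy + (l / ‖y‖) ^ 5 * hu.neg_laplacian_eq _ hinv
  linarith

lemma IsAdmissible.sub_const (hadm : IsAdmissible u H R l) (hE : finrank ℝ E = 3) (hs₀ : 0 ≤ s)
    (hs₁ : s ≤ 5 / 2) (ha : 0 ≤ a) (hA : 0 ≤ A)
    (hu : IsSolutionOn V u a A s m (closedBall 0 R)) (hl : 0 < l) (hlL : l ≤ L) (hLR : L < R)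
    (hC₀ : 0 ≤ C) (hC : ∀ y ∈ closedBall 0 L, u y ≤ C) (hH₀ : 0 ≤ H)
    (hH : 4 * A * C ^ 5 * L ^ (2 + s) < H) (hq₀ : 0 ≤ q) (hq : H + C * L / R + q ≤ m) :
    IsAdmissible (fun y ↦ u y - q) H R l := by
  have hm : 0 ≤ m := by
    have : 0 ≤ C * L / R := div_nonneg (mul_nonneg hC₀ (hl.le.trans hlL))
      ((hl.le.trans hlL).trans hLR.le)
    linarith
  have hinv_le {y : E} (hly : l ≤ ‖y‖) : u (inversion 0 l y) ≤ C :=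
    hC _ (mem_closedBall_zero_iff.mpr ((norm_inversion_zero_le hl.le hly).trans hlL))
  have hsmooth {y : E} (hyR : ‖y‖ ≤ R) : ContDiffAt ℝ 2 u y :=
    hu.contDiffAt y (mem_closedBall_zero_iff.mpr hyR)
  intro y hly hyR
  refine nonneg_of_laplacian_neg (S := {y | l ≤ ‖y‖ ∧ ‖y‖ ≤ R}) (U := {y | l < ‖y‖ ∧ ‖y‖ < R})
    (isCompact_shell l R) ?_ (fun z hz ↦ ⟨hz.1.le, hz.2.le⟩) ?_ (fun z hz ↦ ?_) (fun z hz ↦ ?_)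
    (fun z hz ↦ ?_) ⟨hly, hyR⟩
  · exact (isOpen_lt continuous_const continuous_norm).inter
      (isOpen_lt continuous_norm continuous_const)
  · exact continuousOn_sphereGap hl fun z hz ↦
      (hu.contDiffAt z hz).continuousAt.sub continuousAt_const
  · have hinv := hu.contDiffAt _ (inversion_zero_mem_closedBall hl.le hz.1.le hz.2.le)
    exact contDiffAt_sphereGap hl (norm_pos_iff.mp (hl.trans hz.1))
      ((hsmooth hz.2.le).sub contDiffAt_const) (hinv.sub contDiffAt_const)
  · have hinv := inversion_zero_mem_closedBall hl.le hz.1.le hz.2.le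
    rw [laplacian_sphereGap_sub_const hE hl (norm_pos_iff.mp (hl.trans hz.1))
      (hsmooth hz.2.le) (hu.contDiffAt _ hinv)]
    exact laplacian_sphereGap_neg hE hs₀ hs₁ ha hA hm hu hl hlL hz.1.le
      (mem_closedBall_zero_iff.mpr hz.2.le) hinv (hinv_le hz.1.le) hH₀ hH
      (hadm z hz.1.le hz.2.le)
  · rcases hz.1.1.eq_or_lt with heq | hlt
    · exact (sphereGap_of_norm_eq hl heq.symm).ge
    · have hzR : ‖z‖ = R := hz.1.2.antisymm (not_lt.mp fun h ↦ hz.2 ⟨hlt, h⟩)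
      have hmz := hu.le_sol z (mem_closedBall_zero_iff.mpr hz.1.2)
      exact sphereGap_nonneg_of_norm_eq hl hlL (hlL.trans hLR.le) hzR hC₀
        ((sub_le_self _ hq₀).trans (hinv_le hz.1.1)) hH₀ (by linarith)

theorem kelvinTransform_le_of_isSolutionOn (hE : finrank ℝ E = 3) (hs₀ : 0 ≤ s)
    (hs₁ : s ≤ 5 / 2) (ha : 0 ≤ a) (hA : 0 ≤ A)
    (hu : IsSolutionOn V u a A s m (closedBall 0 R)) (hLR : L < R) (hC₀ : 0 ≤ C)
    (hC : ∀ y ∈ closedBall 0 L, u y ≤ C)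
    (hm : 4 * A * C ^ 5 * L ^ (2 + s) + C * L / R < m) (hl : 0 < l) (hlL : l ≤ L)
    (hly : l ≤ ‖y‖) (hyR : ‖y‖ ≤ R) : kelvinTransform l u y ≤ u y := by
  obtain ⟨H, hH, hHm⟩ : ∃ H, 4 * A * C ^ 5 * L ^ (2 + s) < H ∧ H < m - C * L / R :=
    exists_between (by linarith)
  have hL : 0 < L := hl.trans_le hlL
  have hH₀ : 0 ≤ H := le_trans (by positivity) hH.le
  have hkelvin₀ : 0 ≤ C * L / R := div_nonneg (by positivity) (hL.trans hLR).le
  have hadm : IsAdmissible u H R l := by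
    refine isAdmissible_of_forall_isAdmissible_sub_const (q := m - C * L / R - H) hH₀ hLR
      (by linarith) (fun y hy ↦ (hu.contDiffAt y hy).of_le one_le_two)
      (fun y hy ↦ by linarith [hu.le_sol y hy]) (fun l' hl' hadm' ↦ ?_) ⟨hl, hlL⟩
    exact hadm'.sub_const hE hs₀ hs₁ ha hA hu hl'.1 hl'.2 hLR hC₀ hC hH₀ hH (by linarith)
      (by linarith)
  exact kelvinTransform_le_of_sphereGap_nonneg hH₀ hly (hadm y hly hyR)

lemma laplacian_comp_add_smul {c : ℝ} (hu : ContDiffAt ℝ 2 u (x + c • y)) :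
    Δ (fun z ↦ u (x + c • z)) y = c ^ 2 * Δ u (x + c • y) := by
  let φ : E → E := fun z ↦ x + c • z
  have hφ : ContDiffAt ℝ 2 φ y := contDiffAt_const.add (contDiffAt_const.smul contDiffAt_id)
  have hfderiv : fderiv ℝ φ = fun _ ↦ c • .id ℝ E := by
    ext z : 1
    simp only [φ, fderiv_const_add]
    rw [fderiv_fun_const_smul differentiableAt_fun_id, fderiv_fun_id]
  have hlaplacian : Δ φ y = 0 := by
    simp [laplacian_eq_sum_fderiv_fderiv (stdOrthonormalBasis ℝ E), hfderiv]
  have hcomp := laplacian_comp_of_fderiv_eq_smul (R := .refl ℝ E) (φ := φ) hu hφ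
    fun v ↦ congrArg (· v) (congrFun hfderiv y)
  rwa [hlaplacian, map_zero, add_zero] at hcomp

lemma IsSolutionOn.rescale {M : ℝ} {T : Set E} (hu : IsSolutionOn V u a A s m U) (hM : 0 < M)
    (hT : MapsTo (fun y ↦ x + (M ^ 2)⁻¹ • y) T U) :
    IsSolutionOn (fun y ↦ V (x + (M ^ 2)⁻¹ • y)) (fun y ↦ u (x + (M ^ 2)⁻¹ • y) / M)
      a (A / M ^ (2 * s)) s (m / M) T where
  le_coeff y hy := hu.le_coeff _ (hT hy)
  holder y hy z hz := by
    have hdist : ‖(x + (M ^ 2)⁻¹ • y) - (x + (M ^ 2)⁻¹ • z)‖ ^ s = ‖y - z‖ ^ s / M ^ (2 * s) := by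
      rw [add_sub_add_left_eq_sub, ← smul_sub, norm_smul, norm_inv, norm_of_nonneg (by positivity),
        mul_rpow (by positivity) (norm_nonneg _), inv_rpow (by positivity), rpow_mul hM.le,
        rpow_two]
      ring
    have hholder := hu.holder _ (hT hy) _ (hT hz)
    rw [hdist] at hholder
    exact hholder.trans_eq (by ring)
  contDiffAt y hy := (contDiffAt_comp_add_smul (hu.contDiffAt _ (hT hy))).div_const M
  le_sol y hy := div_le_div_of_nonneg_right (hu.le_sol _ (hT hy)) hM.le
  neg_laplacian_eq y hy := by
    have hdiv : (fun y ↦ u (x + (M ^ 2)⁻¹ • y) / M) = M⁻¹ • fun y ↦ u (x + (M ^ 2)⁻¹ • y) := by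
      ext z
      rw [Pi.smul_apply, smul_eq_mul, div_eq_inv_mul]
    rw [hdiv,
      InnerProductSpace.laplacian_smul _ (contDiffAt_comp_add_smul (hu.contDiffAt _ (hT hy))),
      laplacian_comp_add_smul (hu.contDiffAt _ (hT hy)), smul_eq_mul]
    linear_combination (M⁻¹ ^ 5) * hu.neg_laplacian_eq _ (hT hy)

lemma IsSolutionOn.comp_const_add {T : Set E} (hu : IsSolutionOn V u a A s m U)
    (hT : MapsTo (x + ·) T U) : IsSolutionOn (fun y ↦ V (x + y)) (fun y ↦ u (x + y)) a A s m T := by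
  simpa using hu.rescale (T := T) one_pos (by simpa using hT)

lemma div_add_one_le_of_isSolutionOn {ρ : ℝ} (hE : finrank ℝ E = 3) (hs₀ : 0 ≤ s)
    (hs₁ : s ≤ 5 / 2) (ha : 0 ≤ a) (hA : 0 ≤ A) (hu : IsSolutionOn V u a A s m (ball 0 ρ))
    (hu₀ : u 0 = 1) (hu₂ : ∀ y ∈ closedBall 0 (2 * L + 1), u y ≤ 2) (hL : 0 < L)
    (hρ : 8 * (L + 1) < ρ) (hm : 128 * A * (L + 1) ^ (2 + s) + 8 * (L + 1) / ρ < m)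
    (hy : ‖y‖ ≤ 1) : L / (L + 1) ≤ u y := by
  rcases eq_or_ne y 0 with rfl | hy₀
  · rw [hu₀]
    exact div_le_one_of_le₀ (by linarith) (by linarith)
  have ht : 0 < ‖y‖ := norm_pos_iff.mpr hy₀
  let e : E := ‖y‖⁻¹ • y
  have he : ‖e‖ = 1 := norm_smul_inv_norm hy₀
  have hye : y = ‖y‖ • e := (smul_inv_smul₀ ht.ne' y).symm
  have hshift (z : E) : ‖-(L • e) + z‖ ≤ L + ‖z‖ := by
    refine (norm_add_le _ _).trans_eq ?_
    rw [norm_neg, norm_smul, he, norm_of_nonneg hL.le, mul_one]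
  have hw : IsSolutionOn (fun z ↦ V (-(L • e) + z)) (fun z ↦ u (-(L • e) + z)) a A s m
      (closedBall 0 (ρ / 4)) := by
    refine hu.comp_const_add fun z hz ↦ ?_
    rw [mem_closedBall_zero_iff] at hz
    rw [mem_ball_zero_iff]
    linarith [hshift z]
  have hw₂ : ∀ z ∈ closedBall 0 (L + 1), u (-(L • e) + z) ≤ 2 := fun z hz ↦ hu₂ _ <| by
    rw [mem_closedBall_zero_iff] at hz ⊢
    linarith [hshift z]
  let l := √(L * (L + ‖y‖))
  have hLl : L ≤ l := le_sqrt_of_sq_le (by nlinarith)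
  have hlt : l ≤ L + ‖y‖ := sqrt_le_iff.mpr ⟨by positivity, by nlinarith⟩
  have hnorm : ‖(L + ‖y‖) • e‖ = L + ‖y‖ := by
    rw [norm_smul, he, norm_of_nonneg (by positivity), mul_one]
  have hkelvin := kelvinTransform_le_of_isSolutionOn hE hs₀ hs₁ ha hA hw (by linarith) zero_le_two
    hw₂ (by linear_combination hm) (hL.trans_le hLl) (hlt.trans (by linarith)) (hnorm ▸ hlt)
    (by linarith [hnorm])
  rw [kelvinTransform, inversion_zero_sqrt_smul he hL ht.le, hnorm, neg_add_cancel, hu₀, mul_one,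
    add_smul, neg_add_cancel_left, ← hye] at hkelvin
  exact (by gcongr : L / (L + 1) ≤ l / (L + ‖y‖)).trans hkelvin

theorem le_of_isSolutionOn_of_apply_zero_eq_one {ρ : ℝ} (hE : finrank ℝ E = 3) (hs₀ : 0 ≤ s)
    (hs₁ : s ≤ 5 / 2) (ha : 0 < a) (hA : 0 ≤ A) (hu : IsSolutionOn V u a A s m (ball 0 ρ))
    (hu₀ : u 0 = 1) (hu₂ : ∀ y ∈ closedBall 0 (2 * L + 1), u y ≤ 2) (hL : 1 ≤ L)
    (haL : 200 ≤ a * L) (hρ : 8 * (L + 1) < ρ) :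
    m ≤ 128 * A * (L + 1) ^ (2 + s) + 8 * (L + 1) / ρ := by
  by_contra! hm
  have hmem {y : E} (hy : ‖y‖ ≤ 1) : y ∈ ball 0 ρ := mem_ball_zero_iff.mpr (by linarith)
  have hcmp {y : E} (hy : ‖y‖ ≤ 1) : L / (L + 1) ≤ u y :=
    div_add_one_le_of_isSolutionOn hE hs₀ hs₁ ha.le hA hu hu₀ hu₂ (by linarith) hρ hm hy
  let f : E → ℝ := fun y ↦ (u y + a / 200 * ‖y‖ ^ 2) - (L / (L + 1) + a / 200)
  have hf {y : E} (hy : ‖y‖ ≤ 1) : ContDiffAt ℝ 2 f y :=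
    ((hu.contDiffAt y (hmem hy)).add
      (contDiffAt_const.mul (contDiff_norm_sq ℝ).contDiffAt)).sub contDiffAt_const
  have hneg {y : E} (hy : ‖y‖ ≤ 1) : Δ f y < 0 := by
    have hhalf : 1 / 2 ≤ u y := le_trans (by rw [div_le_div_iff₀] <;> linarith) (hcmp hy)
    have hsource : a * (1 / 2) ^ 5 ≤ V y * u y ^ 5 :=
      mul_le_mul (hu.le_coeff y (hmem hy)) (pow_le_pow_left₀ (by norm_num) hhalf 5) (by positivity)
        (ha.le.trans (hu.le_coeff y (hmem hy)))
    rw [laplacian_sub_const, laplacian_add_mul_norm_sq (hu.contDiffAt y (hmem hy)), hE]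
    -- The constant `200` is chosen so that `6 * (a / 200) < a / 32`.
    norm_num at hsource ⊢
    linarith [hu.neg_laplacian_eq y (hmem hy)]
  have hf₀ : 0 ≤ f 0 := nonneg_of_laplacian_neg (isCompact_closedBall 0 1) isOpen_ball
    ball_subset_closedBall
    (fun y hy ↦ (hf (mem_closedBall_zero_iff.mp hy)).continuousAt.continuousWithinAt)
    (fun y hy ↦ hf (mem_ball_zero_iff.mp hy).le) (fun y hy ↦ hneg (mem_ball_zero_iff.mp hy).le)
    (fun y hy ↦ by
      rw [closedBall_sdiff_ball, mem_sphere_zero_iff_norm] at hy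
      simpa [f, hy] using hcmp hy.le)
    (mem_closedBall_self zero_le_one)
  have hle : L / (L + 1) + a / 200 ≤ 1 := by simpa [f, hu₀] using hf₀
  have hlt : 1 - a / 200 < L / (L + 1) := by
    rw [lt_div_iff₀ (by linarith)]
    nlinarith
  linarith

theorem le_of_isSolutionOn_of_le_two_mul {r : ℝ} (hE : finrank ℝ E = 3) (hs₀ : 0 ≤ s)
    (hs₁ : s ≤ 5 / 2) (ha : 0 < a) (hA : 0 ≤ A) (hu : IsSolutionOn V u a A s m (ball x r))
    (hux : 0 < u x) (hu₂ : ∀ z ∈ closedBall x ((2 * L + 1) / u x ^ 2), u z ≤ 2 * u x)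
    (hL : 1 ≤ L) (haL : 200 ≤ a * L) (hr : 8 * (L + 1) < u x ^ 2 * r) :
    m ≤ 128 * A * (L + 1) ^ (2 + s) * u x ^ (1 - 2 * s) + 8 * (L + 1) / (u x * r) := by
  have hdist (y : E) : dist (x + (u x ^ 2)⁻¹ • y) x = ‖y‖ / u x ^ 2 := by
    rw [dist_self_add_left, norm_smul, norm_inv, norm_of_nonneg (by positivity), inv_mul_eq_div]
  have hT : MapsTo (fun y ↦ x + (u x ^ 2)⁻¹ • y) (ball 0 (u x ^ 2 * r)) (ball x r) := fun y hy ↦ by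
    rw [mem_ball, hdist, div_lt_iff₀' (by positivity)]
    exact mem_ball_zero_iff.mp hy
  have hscaled := le_of_isSolutionOn_of_apply_zero_eq_one hE hs₀ hs₁ ha (by positivity)
    (hu.rescale hux hT) (by simp [hux.ne']) (fun y hy ↦ (div_le_iff₀ hux).mpr (hu₂ _ ?_)) hL haL hr
  · calc m ≤ (128 * (A / u x ^ (2 * s)) * (L + 1) ^ (2 + s) + 8 * (L + 1) / (u x ^ 2 * r)) * u x :=
          (div_le_iff₀ hux).mp hscaled
      _ = 128 * A * (L + 1) ^ (2 + s) * u x ^ (1 - 2 * s) + 8 * (L + 1) / (u x * r) := by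
          rw [rpow_sub hux, rpow_one]
          field_simp
  · rw [mem_closedBall, hdist]
    gcongr
    exact mem_closedBall_zero_iff.mp hy

lemma exists_mem_ball_forall_le_two_mul {X : Type*} [PseudoMetricSpace X] [ProperSpace X]
    {f : X → ℝ} {x₀ : X} {δ : ℝ} (hδ : 0 < δ) (hf : ContinuousOn f (closedBall x₀ δ))
    (hf₀ : 0 < f x₀) :
    ∃ x₁ ∈ ball x₀ δ, δ * f x₀ ≤ (δ - dist x₁ x₀) * f x₁ ∧
      ∀ x ∈ closedBall x₁ ((δ - dist x₁ x₀) / 2), f x ≤ 2 * f x₁ := by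
  obtain ⟨x₁, hx₁, hmax⟩ := (isCompact_closedBall x₀ δ).exists_isMaxOn
    (nonempty_closedBall.mpr hδ.le) (f := fun x ↦ (δ - dist x x₀) * f x)
    ((by fun_prop : Continuous fun x ↦ δ - dist x x₀).continuousOn.mul hf)
  have hle : δ * f x₀ ≤ (δ - dist x₁ x₀) * f x₁ := by
    simpa using hmax (mem_closedBall_self hδ.le)
  have hgap : 0 ≤ δ - dist x₁ x₀ := sub_nonneg.mpr hx₁
  have hprod : 0 < (δ - dist x₁ x₀) * f x₁ := (mul_pos hδ hf₀).trans_le hle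
  have hgap_pos : 0 < δ - dist x₁ x₀ := hgap.lt_of_ne' (left_ne_zero_of_mul hprod.ne')
  refine ⟨x₁, sub_pos.mp hgap_pos, hle, fun x hx ↦ ?_⟩
  have hfx₁ : 0 < f x₁ := pos_of_mul_pos_right hprod hgap
  rcases le_or_gt (f x) 0 with hfx | hfx
  · linarith
  have hdist : (δ - dist x₁ x₀) / 2 ≤ δ - dist x x₀ := by
    linarith [dist_triangle x x₁ x₀, mem_closedBall.mp hx]
  have hx_max : (δ - dist x x₀) * f x ≤ (δ - dist x₁ x₀) * f x₁ :=
    hmax (mem_closedBall.mpr (by linarith))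
  have hhalf := (mul_le_mul_of_nonneg_right hdist hfx.le).trans hx_max
  exact le_of_mul_le_mul_left (by linarith) hgap_pos

lemma rpow_two_mul_sub_one_mul_le_of_sq_le {S κ : ℝ} (hs₀ : 0 ≤ s) (hs₁ : s ≤ 1) (hS : 0 < S)
    (hmS : m ≤ S) (hκ : 1 ≤ κ) (hSκ : S ^ 2 ≤ κ) : S ^ (2 * s - 1) * m ≤ κ :=
  calc S ^ (2 * s - 1) * m ≤ S ^ (2 * s - 1) * S := by gcongr
    _ = (S ^ 2) ^ s := by
      rw [← rpow_add_one hS.ne', sub_add_cancel, rpow_mul hS.le, rpow_two]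
    _ ≤ κ ^ s := by gcongr
    _ ≤ κ := rpow_le_self_of_one_le hκ hs₁

lemma rpow_two_mul_sub_one_mul_le_of_le_add {S M D κ r δ : ℝ} (hs₀ : 1 / 2 ≤ s) (hs₁ : s ≤ 1)
    (hS : 1 ≤ S) (hSM : S ≤ M) (hδ : 0 < δ) (hδr : δ * S ≤ r * M) (hD : 0 ≤ D) (hκ : 0 ≤ κ)
    (hm : m ≤ D * M ^ (1 - 2 * s) + κ / (M * r)) : S ^ (2 * s - 1) * m ≤ D + κ / δ := by
  have hM : 0 < M := by linarith
  have hMr : 0 < M * r := by linarith [mul_pos hδ (zero_lt_one.trans_le hS)]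
  have hpow : S ^ (2 * s - 1) * M ^ (1 - 2 * s) ≤ 1 := by
    rw [← neg_sub (2 * s), rpow_neg hM.le, ← div_eq_mul_inv]
    exact div_le_one_of_le₀ (by gcongr; linarith) (by positivity)
  have hrem : S ^ (2 * s - 1) / (M * r) ≤ 1 / δ := by
    rw [div_le_div_iff₀ hMr hδ]
    calc S ^ (2 * s - 1) * δ ≤ S * δ := by
          gcongr
          exact rpow_le_self_of_one_le hS (by linarith)
      _ ≤ 1 * (M * r) := by linarith
  calc S ^ (2 * s - 1) * m
      ≤ S ^ (2 * s - 1) * (D * M ^ (1 - 2 * s) + κ / (M * r)) := by gcongr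
    _ = D * (S ^ (2 * s - 1) * M ^ (1 - 2 * s)) + κ * (S ^ (2 * s - 1) / (M * r)) := by ring
    _ ≤ D * 1 + κ * (1 / δ) := by gcongr
    _ = D + κ / δ := by rw [mul_one, mul_one_div]

theorem rpow_mul_le_of_isSolutionOn_closedBall {δ : ℝ} (hE : finrank ℝ E = 3) (hs₀ : 1 / 2 ≤ s)
    (hs₁ : s ≤ 1) (ha : 0 < a) (hA : 0 ≤ A) (hm : 0 < m) (hδ : 0 < δ) (hL : 1 ≤ L)
    (haL : 200 ≤ a * L) (hu : IsSolutionOn V u a A s m (closedBall x δ)) :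
    u x ^ (2 * s - 1) * m ≤ 128 * A * (L + 1) ^ (2 + s) + (1 + 8 * (L + 1) / δ) := by
  have hmux : m ≤ u x := hu.le_sol x (mem_closedBall_self hδ.le)
  have hux : 0 < u x := hm.trans_le hmux
  rcases le_or_gt (u x ^ 2) (1 + 8 * (L + 1) / δ) with hsmall | hlarge
  · have hκ : 1 ≤ 1 + 8 * (L + 1) / δ := le_add_of_nonneg_right (by positivity)
    exact (rpow_two_mul_sub_one_mul_le_of_sq_le (by linarith) hs₁ hux hmux hκ hsmall).trans
      (le_add_of_nonneg_left (by positivity))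
  obtain ⟨x₁, hx₁, hweight, hdouble⟩ := exists_mem_ball_forall_le_two_mul hδ
    (fun y hy ↦ (hu.contDiffAt y hy).continuousAt.continuousWithinAt) hux
  set r := δ - dist x₁ x
  have hr : 0 < r := sub_pos.mpr hx₁
  have hux₁ : 0 < u x₁ := pos_of_mul_pos_right ((mul_pos hδ hux).trans_le hweight) hr.le
  have hle : u x ≤ u x₁ := by
    have hrδ : r * u x₁ ≤ δ * u x₁ := by gcongr; exact sub_le_self _ dist_nonneg
    exact le_of_mul_le_mul_left (hweight.trans hrδ) hδ
  have hone : 1 ≤ u x := by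
    have : 0 ≤ 8 * (L + 1) / δ := by positivity
    nlinarith
  have hscale : 8 * (L + 1) < u x₁ ^ 2 * r :=
    calc 8 * (L + 1) < u x ^ 2 * δ := by
          rw [← div_lt_iff₀ hδ]
          linarith
      _ = u x * (δ * u x) := by ring
      _ ≤ u x₁ * (r * u x₁) := by gcongr
      _ = u x₁ ^ 2 * r := by ring
  have hball : ball x₁ r ⊆ closedBall x δ :=
    ball_subset_closedBall.trans (closedBall_subset_closedBall' (by linarith))
  have hblowup := le_of_isSolutionOn_of_le_two_mul hE (by linarith) (by linarith) ha hA
    (hu.mono hball) hux₁ (fun z hz ↦ hdouble z (closedBall_subset_closedBall (by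
      rw [div_le_iff₀ (by positivity)]
      linarith) hz)) hL haL hscale
  have hκ : 0 ≤ 8 * (L + 1) := by positivity
  have hdecay := rpow_two_mul_sub_one_mul_le_of_le_add hs₀ hs₁ hone hle hδ hweight (by positivity)
    hκ hblowup
  linarith

theorem exists_forall_rpow_mul_le_of_isSolutionOn {Ω K : Set E} (hE : finrank ℝ E = 3)
    (hΩ : IsOpen Ω) (hK : IsCompact K) (hKΩ : K ⊆ Ω) (hs₀ : 1 / 2 ≤ s) (hs₁ : s ≤ 1) (ha : 0 < a)
    (hA : 0 ≤ A) :
    ∃ c > 0, ∀ V u : E → ℝ, ∀ m > 0, IsSolutionOn V u a A s m Ω →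
      ∀ x ∈ K, u x ^ (2 * s - 1) * m ≤ c := by
  obtain ⟨δ, hδ, hδΩ⟩ := hK.exists_cthickening_subset_open hΩ hKΩ
  let L := 200 / a + 1
  have hL : 1 ≤ L := le_add_of_nonneg_left (by positivity)
  have haL : 200 ≤ a * L := by
    rw [mul_add, mul_div_cancel₀ _ ha.ne', mul_one]
    linarith
  refine ⟨128 * A * (L + 1) ^ (2 + s) + (1 + 8 * (L + 1) / δ), by positivity,
    fun V u m hm hu x hx ↦ ?_⟩
  exact rpow_mul_le_of_isSolutionOn_closedBall hE hs₀ hs₁ ha hA hm hδ hL haL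
    (hu.mono ((closedBall_subset_cthickening hx δ).trans hδΩ))

end ScalarCurvatureEquation

theorem sup_rpow_mul_inf_le_general [FiniteDimensional ℝ E] (hE : finrank ℝ E = 3) {Ω K : Set E}
    (hΩ : IsOpen Ω) (hK : IsCompact K) (hKΩ : K ⊆ Ω) {a A s : ℝ} (hs₀ : 1 / 2 ≤ s) (hs₁ : s ≤ 1)
    (ha : 0 < a) (hA : 0 ≤ A) :
    ∃ c > 0, ∀ V u : E → ℝ, (∀ x ∈ Ω, a ≤ V x) →
      (∀ x ∈ Ω, ∀ y ∈ Ω, |V x - V y| ≤ A * ‖x - y‖ ^ s) → ContDiffOn ℝ 2 u Ω →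
      (∀ x ∈ Ω, 0 < u x) → (∀ x ∈ Ω, -Δ u x = V x * u x ^ 5) →
      sSup (u '' K) ^ (2 * s - 1) * sInf (u '' Ω) ≤ c := by
  rcases Ω.eq_empty_or_nonempty with rfl | ⟨x₀, hx₀⟩
  · exact ⟨1, one_pos, by simp⟩
  have hK₀ : IsCompact (insert x₀ K) := hK.insert x₀
  have hK₀Ω : insert x₀ K ⊆ Ω := insert_subset hx₀ hKΩ
  obtain ⟨c, hc, hbound⟩ := exists_forall_rpow_mul_le_of_isSolutionOn hE hΩ hK₀ hK₀Ω hs₀ hs₁ ha hA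
  refine ⟨c, hc, fun V u hV hholder hu hpos heq ↦ ?_⟩
  have hpos_image : ∀ t ∈ u '' Ω, 0 ≤ t := forall_mem_image.mpr fun x hx ↦ (hpos x hx).le
  rcases (Real.sInf_nonneg hpos_image).eq_or_lt with hinf | hinf
  · rw [← hinf, mul_zero]
    exact hc.le
  obtain ⟨x, hx, hmax⟩ := hK₀.exists_isMaxOn (insert_nonempty x₀ K) (hu.continuousOn.mono hK₀Ω)
  have hsup : sSup (u '' K) ≤ u x := Real.sSup_le
    (forall_mem_image.mpr fun y hy ↦ hmax (mem_insert_of_mem x₀ hy)) (hpos x (hK₀Ω hx)).le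
  have hsup₀ : 0 ≤ sSup (u '' K) :=
    Real.sSup_nonneg fun t ht ↦ hpos_image t (image_mono hKΩ ht)
  calc sSup (u '' K) ^ (2 * s - 1) * sInf (u '' Ω) ≤ u x ^ (2 * s - 1) * sInf (u '' Ω) := by
        gcongr
        linarith
    _ ≤ c := hbound V u _ hinf
        { le_coeff := hV
          holder := hholder
          contDiffAt := fun y hy ↦ hu.contDiffAt (hΩ.mem_nhds hy)
          le_sol := fun y hy ↦ csInf_le ⟨0, hpos_image⟩ (mem_image_of_mem u hy)
          neg_laplacian_eq := heq } x hx

lemma lapl_eq_laplacian {n : ℕ} {u : EuclideanSpace ℝ (Fin n) → ℝ} {x : EuclideanSpace ℝ (Fin n)}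
    (hu : ContDiffAt ℝ 2 u x) : lapl u x = Δ u x := by
  simp only [lapl, laplacian_eq_sum_fderiv_apply (EuclideanSpace.basisFun (Fin n) ℝ) hu,
    EuclideanSpace.basisFun_apply]

/-- On the unit ball `B` of `ℝ³`, for `s ∈ (1/2, 1]`, `a, b, A > 0` and
`K` compact in `B`, there is `c = c(a,b,A,s,K) > 0` such that every positive
`C²` solution of `Δu = V u⁵` in `B`, with `a ≤ V ≤ b` and `V` s-Hölder with
constant `A`, satisfies `(sup_K u)^{2s-1} · inf_B u ≤ c`. -/
theorem sup_rpow_mul_inf_le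
    (s : ℝ) (hs₁ : 1 / 2 < s) (hs₂ : s ≤ 1)
    (a b A : ℝ) (ha : 0 < a) (hb : 0 < b) (hA : 0 < A)
    (K : Set (EuclideanSpace ℝ (Fin 3))) (hK : IsCompact K)
    (hKB : K ⊆ ball (0 : EuclideanSpace ℝ (Fin 3)) 1) :
    ∃ c : ℝ, 0 < c ∧
      ∀ (V u : EuclideanSpace ℝ (Fin 3) → ℝ),
        (∀ x ∈ ball (0 : EuclideanSpace ℝ (Fin 3)) 1, a ≤ V x ∧ V x ≤ b) →
        (∀ x ∈ ball (0 : EuclideanSpace ℝ (Fin 3)) 1,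
          ∀ y ∈ ball (0 : EuclideanSpace ℝ (Fin 3)) 1,
            |V x - V y| ≤ A * ‖x - y‖ ^ s) →
        ContDiffOn ℝ 2 u (ball (0 : EuclideanSpace ℝ (Fin 3)) 1) →
        (∀ x ∈ ball (0 : EuclideanSpace ℝ (Fin 3)) 1, 0 < u x) →
        (∀ x ∈ ball (0 : EuclideanSpace ℝ (Fin 3)) 1, -lapl u x = V x * u x ^ 5) →
        (sSup (u '' K)) ^ (2 * s - 1) * sInf (u '' ball (0 : EuclideanSpace ℝ (Fin 3)) 1)
          ≤ c := by
  obtain ⟨c, hc, hbound⟩ := sup_rpow_mul_inf_le_general finrank_euclideanSpace_fin isOpen_ball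
    hK hKB hs₁.le hs₂ ha hA.le
  exact ⟨c, hc, fun V u hV hholder hu hpos heq ↦ hbound V u (fun x hx ↦ (hV x hx).1) hholder hu
    hpos fun x hx ↦ lapl_eq_laplacian (hu.contDiffAt (isOpen_ball.mem_nhds hx)) ▸ heq x hx⟩
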